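/- Let 0 ≤ d < 4/5. Then the iterated integral ∫₀¹ ∫₀^{y₂} (1-y₃)^{-d} ∫₀^{y₃} (y₂-y₄)^{-d}(1-y₄)^{-d} ∫₀^{y₄} (y₂-y₅)^{-d}(y₃-y₅)^{-d} dy₅ dy₄ dy₃ dy₂ equals [Γ(1-d)Γ(2-d)Γ(4-5d)/((1-d)² Γ(3-2d) Γ(5-5d))]·₃F₂(1,d,2-2d;2-d,3-2d;1) − [Γ(1-d)Γ(3-3d)Γ(4-5d)/((1-d)² Γ(4-4d) Γ(5-5d))]·₄F₃(1,d,2-2d,3-3d;2-d,3-2d,4-4d;1). -/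

import Mathlib

open Real MeasureTheory

/-- Pochhammer symbol `(a)_k = a (a+1) ⋯ (a+k-1)` for real `a`. -/
noncomputable def poch (a : ℝ) (k : ℕ) : ℝ := (ascPochhammer ℝ k).eval a

/-- Gaussian hypergeometric function `₂F₁(a,b;c;z)`. -/
noncomputable def hyp2F1 (a b c z : ℝ) : ℝ :=
  ∑' k : ℕ, (poch a k * poch b k) / poch c k * z ^ k / (Nat.factorial k)

/-- Generalized hypergeometric function `₃F₂(a₁,a₂,a₃;b₁,b₂;z)`. -/
noncomputable def hyp3F2 (a₁ a₂ a₃ b₁ b₂ z : ℝ) : ℝ :=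
  ∑' k : ℕ, (poch a₁ k * poch a₂ k * poch a₃ k) / (poch b₁ k * poch b₂ k) * z ^ k /
    (Nat.factorial k)

/-- Generalized hypergeometric function `₄F₃(a₁,a₂,a₃,a₄;b₁,b₂,b₃;z)`. -/
noncomputable def hyp4F3 (a₁ a₂ a₃ a₄ b₁ b₂ b₃ z : ℝ) : ℝ :=
  ∑' k : ℕ, (poch a₁ k * poch a₂ k * poch a₃ k * poch a₄ k) /
    (poch b₁ k * poch b₂ k * poch b₃ k) * z ^ k / (Nat.factorial k)


lemma lint_affine (f : ℝ → ENNReal) (c : ℝ) {k : ℝ} (hk : 0 < k) :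
    ∫⁻ x, f x = ENNReal.ofReal k * ∫⁻ x, f (c + k * x) := by
  have h1 := lintegral_add_left_eq_self (μ := (volume : Measure ℝ)) f c
  have h2 := lintegral_map_equiv (μ := (volume : Measure ℝ)) (fun x => f (c + x))
    (Homeomorph.mulLeft₀ k hk.ne').toMeasurableEquiv
  have h3 : Measure.map (⇑(Homeomorph.mulLeft₀ k hk.ne').toMeasurableEquiv) (volume : Measure ℝ)
      = ENNReal.ofReal |k⁻¹| • volume := by
    exact Real.map_volume_mul_left hk.ne'
  rw [h3, lintegral_smul_measure, abs_of_pos (inv_pos.2 hk), h1] at h2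
  have h4 : ∫⁻ x, f (c + k * x) = ENNReal.ofReal k⁻¹ • ∫⁻ x, f x := h2.symm
  rw [h4, smul_eq_mul, ← mul_assoc, ← ENNReal.ofReal_mul hk.le, mul_inv_cancel₀ hk.ne']
  simp

lemma lint_beta {α β : ℝ} (hα : 0 < α) (hβ : 0 < β) :
    ∫⁻ x : ℝ, (if 0 < x ∧ x < 1 then ENNReal.ofReal (x ^ (α - 1) * (1 - x) ^ (β - 1)) else 0)
      = ENNReal.ofReal (ProbabilityTheory.beta α β) := by
  have h := ProbabilityTheory.lintegral_betaPDF_eq_one hα hβ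
  have hb := ProbabilityTheory.beta_pos hα hβ
  have e : ∀ x : ℝ, (if 0 < x ∧ x < 1 then ENNReal.ofReal (x ^ (α - 1) * (1 - x) ^ (β - 1)) else 0)
      = ENNReal.ofReal (ProbabilityTheory.beta α β) * ProbabilityTheory.betaPDF α β x := by
    intro x
    rw [ProbabilityTheory.betaPDF_eq, ← ENNReal.ofReal_mul hb.le]
    split_ifs
    · congr 1
      field_simp
    · simp
  simp_rw [e]
  rw [lintegral_const_mul', h, mul_one]
  exact ENNReal.ofReal_ne_top

lemma poch_succ (a : ℝ) (k : ℕ) : poch a (k + 1) = poch a k * (a + k) := by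
  simp [poch, ascPochhammer_succ_eval]

lemma poch_zero (a : ℝ) : poch a 0 = 1 := by simp [poch]

lemma poch_pos {a : ℝ} (ha : 0 < a) (k : ℕ) : 0 < poch a k := by
  induction k with
  | zero => simp [poch_zero]
  | succ n ih => rw [poch_succ]; positivity

lemma poch_nonneg {a : ℝ} (ha : 0 ≤ a) (k : ℕ) : 0 ≤ poch a k := by
  induction k with
  | zero => simp [poch_zero]
  | succ n ih => rw [poch_succ]; positivity

lemma Gamma_poch {a : ℝ} (ha : 0 < a) (k : ℕ) :
    Real.Gamma (a + k) = poch a k * Real.Gamma a := by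
  induction k with
  | zero => simp [poch_zero]
  | succ n ih =>
    rw [poch_succ, Nat.cast_succ, ← add_assoc, Real.Gamma_add_one (by positivity), ih]; ring

lemma poch_one (k : ℕ) : poch 1 k = Nat.factorial k := by
  simp [poch]

lemma poch_ratio {a : ℝ} (ha : 0 < a) (k : ℕ) :
    poch a k / poch (a + 1) k = a / (a + k) := by
  have h := (poch_pos (show 0 < a + 1 by linarith) k).ne'
  have h2 : (a + k) ≠ 0 := by positivity
  rw [div_eq_div_iff h h2]
  clear h h2
  induction k with
  | zero => simp [poch_zero]
  | succ n ih =>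
    rw [poch_succ, poch_succ]
    push_cast
    linear_combination (a + n + 1) * ih

lemma binom_hasSum (d : ℝ) {x : ℝ} (h0 : 0 ≤ x) (h1 : x < 1) :
    HasSum (fun k : ℕ => poch d k / (Nat.factorial k) * x ^ k) ((1 - x) ^ (-d)) := by
  have h := (Real.one_div_one_sub_rpow_hasFPowerSeriesOnBall_zero d).hasSum (y := x) (by
    simp [Metric.mem_eball, edist_dist, dist_zero_right, abs_of_nonneg h0, h1])
  simp only [zero_add, FormalMultilinearSeries.ofScalars_apply_eq] at h
  have e : (fun k : ℕ => poch d k / (Nat.factorial k) * x ^ k)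
      = fun n : ℕ => Ring.choose (d + n - 1) n • x ^ n := by
    funext k
    have := Ring.factorial_nsmul_multichoose_eq_ascPochhammer d k
    rw [Polynomial.ascPochhammer_smeval_eq_eval] at this
    rw [← Ring.multichoose_eq, poch, ← this]
    rw [nsmul_eq_mul, smul_eq_mul, mul_div_cancel_left₀ _ (by positivity)]
  rw [e, Real.rpow_neg (by linarith), ← one_div]
  exact h

lemma lint_toReal {f : ℝ → ENNReal} (hf : Measurable f) (h : ∫⁻ x, f x ≠ ⊤) :
    ∫ x, (f x).toReal = (∫⁻ x, f x).toReal :=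
  integral_toReal hf.aemeasurable (ae_lt_top hf h)

lemma lint_toReal2 {f : ℝ → ℝ → ENNReal} (hf : Measurable (fun p : ℝ × ℝ => f p.1 p.2))
    (h : ∫⁻ x, ∫⁻ y, f x y ≠ ⊤) :
    ∫ x, ∫ y, (f x y).toReal = (∫⁻ x, ∫⁻ y, f x y).toReal := by
  have hm : Measurable (fun x => ∫⁻ y, f x y) := hf.lintegral_prod_right'
  rw [← lint_toReal hm h]
  refine integral_congr_ae ?_
  filter_upwards [ae_lt_top hm h] with x hx
  exact lint_toReal (hf.comp (measurable_const.prodMk measurable_id)) hx.ne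

lemma lint_toReal3 {f : ℝ → ℝ → ℝ → ENNReal}
    (hf : Measurable (fun p : ℝ × ℝ × ℝ => f p.1 p.2.1 p.2.2))
    (h : ∫⁻ x, ∫⁻ y, ∫⁻ z, f x y z ≠ ⊤) :
    ∫ x, ∫ y, ∫ z, (f x y z).toReal = (∫⁻ x, ∫⁻ y, ∫⁻ z, f x y z).toReal := by
  have hm2 : Measurable (fun p : ℝ × ℝ => ∫⁻ z, f p.1 p.2 z) :=
    Measurable.lintegral_prod_right' (f := fun q : (ℝ × ℝ) × ℝ => f q.1.1 q.1.2 q.2)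
      (hf.comp (by fun_prop : Measurable fun q : (ℝ × ℝ) × ℝ => (q.1.1, q.1.2, q.2)))
  have hm : Measurable (fun x => ∫⁻ y, ∫⁻ z, f x y z) := hm2.lintegral_prod_right'
  rw [← lint_toReal hm h]
  refine integral_congr_ae ?_
  filter_upwards [ae_lt_top hm h] with x hx
  exact lint_toReal2 (f := f x) (hf.comp (measurable_const.prodMk measurable_id)) hx.ne

lemma lint_toReal4 {f : ℝ → ℝ → ℝ → ℝ → ENNReal}
    (hf : Measurable (fun p : ℝ × ℝ × ℝ × ℝ => f p.1 p.2.1 p.2.2.1 p.2.2.2))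
    (h : ∫⁻ x, ∫⁻ y, ∫⁻ z, ∫⁻ w, f x y z w ≠ ⊤) :
    ∫ x, ∫ y, ∫ z, ∫ w, (f x y z w).toReal = (∫⁻ x, ∫⁻ y, ∫⁻ z, ∫⁻ w, f x y z w).toReal := by
  have hm3 : Measurable (fun p : (ℝ × ℝ) × ℝ => ∫⁻ w, f p.1.1 p.1.2 p.2 w) :=
    Measurable.lintegral_prod_right' (f := fun q : ((ℝ × ℝ) × ℝ) × ℝ => f q.1.1.1 q.1.1.2 q.1.2 q.2)
      (hf.comp (by fun_prop :
        Measurable fun q : ((ℝ × ℝ) × ℝ) × ℝ => (q.1.1.1, q.1.1.2, q.1.2, q.2)))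
  have hm2 : Measurable (fun p : ℝ × ℝ => ∫⁻ z, ∫⁻ w, f p.1 p.2 z w) := hm3.lintegral_prod_right'
  have hm : Measurable (fun x => ∫⁻ y, ∫⁻ z, ∫⁻ w, f x y z w) := hm2.lintegral_prod_right'
  rw [← lint_toReal hm h]
  refine integral_congr_ae ?_
  filter_upwards [ae_lt_top hm h] with x hx
  exact lint_toReal3 (f := f x) (hf.comp (measurable_const.prodMk measurable_id)) hx.ne

lemma lint_swap {f : ℝ → ℝ → ENNReal} (hf : Measurable (fun p : ℝ × ℝ => f p.1 p.2)) :
    ∫⁻ x, ∫⁻ y, f x y = ∫⁻ y, ∫⁻ x, f x y :=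
  lintegral_lintegral_swap hf.aemeasurable

lemma lint_pow {b p : ℝ} (hb : 0 < b) (hp : 0 < p) :
    ∫⁻ x : ℝ, (if 0 < x ∧ x < b then ENNReal.ofReal (x ^ (p - 1)) else 0)
      = ENNReal.ofReal (b ^ p / p) := by
  rw [lint_affine _ 0 hb]
  have e : ∀ x : ℝ, (if 0 < 0 + b * x ∧ 0 + b * x < b then ENNReal.ofReal ((0 + b * x) ^ (p - 1)) else 0)
      = ENNReal.ofReal (b ^ (p - 1)) *
        (if 0 < x ∧ x < 1 then ENNReal.ofReal (x ^ (p - 1) * (1 - x) ^ ((1:ℝ) - 1)) else 0) := by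
    intro x
    have h1 : (0 < 0 + b * x ∧ 0 + b * x < b) ↔ (0 < x ∧ x < 1) := by
      rw [zero_add, mul_pos_iff_of_pos_left hb, mul_lt_iff_lt_one_right hb]
    by_cases h : 0 < x ∧ x < 1
    · rw [if_pos h, if_pos (h1.2 h), ← ENNReal.ofReal_mul (by positivity), zero_add,
        Real.mul_rpow hb.le h.1.le]
      simp
    · rw [if_neg h, if_neg (fun h' => h (h1.1 h'))]; simp
  simp_rw [e]
  rw [lintegral_const_mul' _ _ ENNReal.ofReal_ne_top, lint_beta hp one_pos,
    ← ENNReal.ofReal_mul (by positivity), ← ENNReal.ofReal_mul hb.le]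
  congr 1
  rw [ProbabilityTheory.beta, Real.Gamma_one, Real.Gamma_add_one hp.ne', Real.rpow_sub_one hb.ne']
  have := (Real.Gamma_pos_of_pos hp).ne'
  field_simp

noncomputable def Mf (d a c : ℝ) : ENNReal :=
  if 0 < c ∧ c < a ∧ a < 1 then
    ENNReal.ofReal (a ^ (-d) * (1 - c) ^ (-d) * (a - c) ^ (-d)) else 0

lemma Mf_meas (d : ℝ) : Measurable (fun p : ℝ × ℝ => Mf d p.1 p.2) := by
  unfold Mf
  refine Measurable.ite ?_ (by fun_prop) (by fun_prop)
  simp only [Set.ofPred_and]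
  refine .inter ?_ (.inter ?_ ?_) <;> refine measurableSet_lt ?_ ?_ <;> fun_prop

noncomputable def co (d : ℝ) (k : ℕ) : ℝ := poch d k / ((1 - d) * poch (2 - d) k)

lemma co_nonneg {d : ℝ} (h0 : 0 ≤ d) (h1 : d < 1) (k : ℕ) : 0 ≤ co d k := by
  have := poch_nonneg h0 k
  have := poch_pos (show 0 < 2 - d by linarith) k
  have : 0 < 1 - d := by linarith
  unfold co; positivity

lemma P_eq {d a : ℝ} (h0 : 0 ≤ d) (h1 : d < 1) (ha0 : 0 < a) (ha1 : a < 1) :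
    ∫⁻ c, Mf d a c = ∑' k : ℕ, ENNReal.ofReal (co d k) * ENNReal.ofReal (a ^ ((k + 2 - 2 * d) - 1)) := by
  rw [lint_affine _ 0 ha0]
  have e : ∀ s : ℝ, Mf d a (0 + a * s) = ∑' k : ℕ,
      ENNReal.ofReal (a ^ (-2 * d) * a ^ k * (poch d k / (Nat.factorial k))) *
      (if 0 < s ∧ s < 1 then ENNReal.ofReal (s ^ (((k:ℝ) + 1) - 1) * (1 - s) ^ ((1 - d) - 1)) else 0) := by
    intro s
    have hiff : (0 < 0 + a * s ∧ 0 + a * s < a ∧ a < 1) ↔ (0 < s ∧ s < 1) := by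
      rw [zero_add, mul_pos_iff_of_pos_left ha0, mul_lt_iff_lt_one_right ha0]
      tauto
    unfold Mf
    by_cases h : 0 < s ∧ s < 1
    · rw [if_pos (hiff.2 h)]
      simp_rw [if_pos h]
      obtain ⟨hs0, hs1⟩ := h
      have has0 : 0 ≤ a * s := by positivity
      have has1 : a * s < 1 := by nlinarith
      have hS := (binom_hasSum d has0 has1).mul_left (a ^ (-2 * d) * (1 - s) ^ (-d))
      have hp : ∀ k, 0 ≤ poch d k := poch_nonneg h0
      have h1s : 0 < 1 - s := by linarith
      have hval : a ^ (-d) * (1 - (0 + a * s)) ^ (-d) * (a - (0 + a * s)) ^ (-d)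
          = a ^ (-2 * d) * (1 - s) ^ (-d) * (1 - a * s) ^ (-d) := by
        rw [zero_add, show a - a * s = a * (1 - s) by ring, Real.mul_rpow ha0.le h1s.le,
          show -2 * d = -d + -d by ring, Real.rpow_add ha0]
        ring
      rw [hval, ← hS.tsum_eq, ENNReal.ofReal_tsum_of_nonneg _ hS.summable]
      · refine tsum_congr fun k => ?_
        have := hp k
        rw [← ENNReal.ofReal_mul (by positivity)]
        congr 1
        rw [show (k:ℝ) + 1 - 1 = k by ring, Real.rpow_natCast, show 1 - d - 1 = -d by ring, mul_pow]
        ring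
      · intro k
        have := hp k
        positivity
    · rw [if_neg (fun h' => h (hiff.1 h'))]
      simp [h]
  simp_rw [e]
  rw [lintegral_tsum, ← ENNReal.tsum_mul_left]
  · refine tsum_congr fun k => ?_
    have hp : 0 ≤ poch d k := poch_nonneg h0 k
    have h2 : 0 < 1 - d := by linarith
    rw [lintegral_const_mul' _ _ ENNReal.ofReal_ne_top, lint_beta (by positivity) h2,
      ← ENNReal.ofReal_mul (by positivity), ← ENNReal.ofReal_mul ha0.le,
      ← ENNReal.ofReal_mul (co_nonneg h0 h1 k)]
    congr 1
    have h3 := (Real.Gamma_pos_of_pos h2).ne'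
    have h4 := (poch_pos (show 0 < 2 - d by linarith) k).ne'
    have h5 : Real.Gamma (k + 1 + (1 - d)) = poch (2 - d) k * ((1 - d) * Real.Gamma (1 - d)) := by
      rw [show (k:ℝ) + 1 + (1 - d) = (2 - d) + k by ring, Gamma_poch (by linarith),
        ← Real.Gamma_add_one h2.ne']
      congr 2; ring
    rw [ProbabilityTheory.beta, h5, Real.Gamma_nat_eq_factorial, co,
      show (k:ℝ) + 2 - 2 * d - 1 = -2 * d + k + 1 by ring, Real.rpow_add_one ha0.ne',
      Real.rpow_add_natCast ha0.ne']
    have := Nat.factorial_ne_zero k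
    field_simp
  · intro k
    refine Measurable.aemeasurable (Measurable.const_mul (Measurable.ite ?_ (by fun_prop) (by fun_prop)) _)
    exact measurableSet_Ioo

noncomputable def Qf (d b : ℝ) : ENNReal := ∫⁻ a, ∫⁻ c, if a < b then Mf d a c else 0

noncomputable def qk (d : ℝ) (k : ℕ) : ℝ := co d k / (k + 2 - 2 * d)

lemma qk_nonneg {d : ℝ} (h0 : 0 ≤ d) (h1 : d < 1) (k : ℕ) : 0 ≤ qk d k := by
  refine div_nonneg (co_nonneg h0 h1 k) ?_
  have : (0:ℝ) ≤ k := k.cast_nonneg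
  linarith

lemma Q_eq {d b : ℝ} (h0 : 0 ≤ d) (h1 : d < 1) (hb0 : 0 < b) (hb1 : b ≤ 1) :
    Qf d b = ∑' k : ℕ, ENNReal.ofReal (qk d k * b ^ (k + 2 - 2 * d)) := by
  have e : ∀ a : ℝ, (∫⁻ c, if a < b then Mf d a c else 0) =
      ∑' k : ℕ, ENNReal.ofReal (co d k) *
        (if 0 < a ∧ a < b then ENNReal.ofReal (a ^ ((k + 2 - 2 * d) - 1)) else 0) := by
    intro a
    by_cases hab : a < b
    · by_cases ha : 0 < a
      · simp only [hab, ha, if_true, and_self]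
        exact P_eq h0 h1 ha (by linarith)
      · have : ∀ c, Mf d a c = 0 := fun c => if_neg (by rintro ⟨h, h', -⟩; linarith)
        simp [ha, this]
    · simp [hab]
  unfold Qf
  simp_rw [e]
  rw [lintegral_tsum]
  · refine tsum_congr fun k => ?_
    have h2 : 0 < (k:ℝ) + 2 - 2 * d := by
      have : (0:ℝ) ≤ k := k.cast_nonneg
      linarith
    rw [lintegral_const_mul' _ _ ENNReal.ofReal_ne_top, lint_pow hb0 h2,
      ← ENNReal.ofReal_mul (co_nonneg h0 h1 k), qk]
    congr 1
    ring
  · intro k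
    refine Measurable.aemeasurable (Measurable.const_mul (Measurable.ite ?_ (by fun_prop) (by fun_prop)) _)
    exact measurableSet_Ioo

lemma qk_summable {d : ℝ} (h0 : 0 ≤ d) (h1 : d < 1) : Summable (qk d) := by
  have hd : 0 < 1 - d := by linarith
  set u : ℕ → ℝ := fun k => poch d k / poch (2 - d) k with hu
  have hu0 : ∀ k, 0 ≤ u k := fun k =>
    div_nonneg (poch_nonneg h0 k) (poch_pos (by linarith) k).le
  set C : ℝ := (2 - d) / (2 - 2 * d) / ((1 - d) * (2 - 2 * d))
  have hle : ∀ k, qk d k ≤ C * (u k - u (k + 1)) := by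
    intro k
    have hk : (0:ℝ) ≤ k := k.cast_nonneg
    have h3 := poch_pos (show 0 < 2 - d by linarith) k
    have h4 : 0 < 2 - d + k := by linarith
    have h5 : 0 < (k:ℝ) + 2 - 2 * d := by linarith
    have h6 : 0 < 2 - 2 * d := by linarith
    have e1 : u k - u (k + 1) = u k * ((2 - 2 * d) / (2 - d + k)) := by
      simp only [hu, poch_succ]
      field_simp
      ring
    have e2 : qk d k = u k / (1 - d) * (1 / (k + 2 - 2 * d)) := by
      simp only [hu, qk, co]
      field_simp
    have e3 : C * (u k - u (k + 1)) = u k / (1 - d) * ((2 - d) / (2 - 2 * d) / (2 - d + k)) := by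
      rw [e1]
      simp only [C]
      field_simp
    rw [e2, e3]
    refine mul_le_mul_of_nonneg_left ?_ (div_nonneg (hu0 k) hd.le)
    rw [div_div, div_le_div_iff₀ h5 (by positivity)]
    nlinarith [mul_nonneg h0 hk]
  have hC : 0 ≤ C := by
    have : 0 < 2 - d := by linarith
    have : 0 < 2 - 2 * d := by linarith
    positivity
  refine summable_of_sum_range_le (c := C * u 0) (qk_nonneg h0 h1) fun n => ?_
  calc ∑ i ∈ Finset.range n, qk d i ≤ ∑ i ∈ Finset.range n, C * (u i - u (i + 1)) :=
        Finset.sum_le_sum fun i _ => hle i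
    _ = C * (u 0 - u n) := by rw [← Finset.mul_sum, Finset.sum_range_sub']
    _ ≤ C * u 0 := mul_le_mul_of_nonneg_left (by linarith [hu0 n]) hC

noncomputable def Gf (d b : ℝ) : ENNReal := ∫⁻ a, ∫⁻ c, if c < b ∧ b < a then Mf d a c else 0

noncomputable def Wf (d b : ℝ) : ENNReal :=
  if 0 < b ∧ b < 1 then ENNReal.ofReal (b ^ (-d) * (1 - b) ^ (-d)) else 0

lemma Wf_meas (d : ℝ) : Measurable (Wf d) := by
  unfold Wf
  exact Measurable.ite measurableSet_Ioo (by fun_prop) (by fun_prop)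

lemma Mf_symm (d a c : ℝ) : Mf d (1 - c) (1 - a) = Mf d a c := by
  unfold Mf
  refine if_congr ⟨?_, ?_⟩ ?_ rfl
  · rintro ⟨h1, h2, h3⟩; exact ⟨by linarith, by linarith, by linarith⟩
  · rintro ⟨h1, h2, h3⟩; exact ⟨by linarith, by linarith, by linarith⟩
  · rw [sub_sub_cancel, show 1 - c - (1 - a) = a - c by ring, mul_comm (a ^ (-d))]

lemma Mf_ite_meas (d : ℝ) (S : Set (ℝ × ℝ)) (hS : MeasurableSet S) [DecidablePred (· ∈ S)] :
    Measurable (fun p : ℝ × ℝ => if p ∈ S then Mf d p.1 p.2 else 0) :=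
  Measurable.ite hS (Mf_meas d) measurable_const

lemma Q_reflect (d b : ℝ) : ∫⁻ a, ∫⁻ c, (if b < c then Mf d a c else 0) = Qf d (1 - b) := by
  have hm : Measurable (fun p : ℝ × ℝ => if b < p.2 then Mf d p.1 p.2 else 0) :=
    Measurable.ite (measurableSet_lt measurable_const measurable_snd) (Mf_meas d) measurable_const
  rw [lint_swap hm]
  unfold Qf
  rw [← lintegral_sub_left_eq_self _ (1:ℝ)]
  refine lintegral_congr fun x => ?_
  rw [← lintegral_sub_left_eq_self _ (1:ℝ)]
  refine lintegral_congr fun y => ?_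
  rw [← Mf_symm d x y]
  exact if_congr ⟨fun h => by linarith, fun h => by linarith⟩ rfl rfl

lemma split_eq (d b : ℝ) : Gf d b + Qf d b + Qf d (1 - b) = Qf d 1 := by
  have hm1 : Measurable (fun p : ℝ × ℝ => if p.2 < b ∧ b < p.1 then Mf d p.1 p.2 else 0) :=
    Measurable.ite ((measurableSet_lt measurable_snd measurable_const).inter
      (measurableSet_lt measurable_const measurable_fst)) (Mf_meas d) measurable_const
  have hm2 : Measurable (fun p : ℝ × ℝ => if p.1 < b then Mf d p.1 p.2 else 0) :=
    Measurable.ite (measurableSet_lt measurable_fst measurable_const) (Mf_meas d) measurable_const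
  rw [← Q_reflect]
  unfold Gf Qf
  have n1 : Measurable fun a => ∫⁻ c, if c < b ∧ b < a then Mf d a c else 0 :=
    hm1.lintegral_prod_right'
  have n2 : Measurable fun a => ∫⁻ c, if a < b then Mf d a c else 0 :=
    hm2.lintegral_prod_right'
  rw [← lintegral_add_left n1, ← lintegral_add_left (n1.fun_add n2)]
  refine lintegral_congr_ae ?_
  filter_upwards [Measure.ae_ne (volume : Measure ℝ) b] with a ha
  have o1 : Measurable fun c => if c < b ∧ b < a then Mf d a c else 0 :=
    hm1.comp (measurable_const.prodMk measurable_id)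
  have o2 : Measurable fun c => if a < b then Mf d a c else 0 :=
    hm2.comp (measurable_const.prodMk measurable_id)
  rw [← lintegral_add_left o1, ← lintegral_add_left (o1.fun_add o2)]
  · refine lintegral_congr_ae ?_
    filter_upwards [Measure.ae_ne (volume : Measure ℝ) b] with c hc
    by_cases hM : 0 < c ∧ c < a ∧ a < 1
    · obtain ⟨h1, h2, h3⟩ := hM
      rcases lt_or_gt_of_ne ha with ha | ha
      · simp [ha, h3, not_lt.2 ha.le, not_lt.2 (h2.trans ha).le]
      · rcases lt_or_gt_of_ne hc with hc | hc
        · simp [ha, h3, hc, not_lt.2 ha.le, not_lt.2 hc.le]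
        · simp [h3, hc, not_lt.2 ha.le, not_lt.2 hc.le]
    · have : Mf d a c = 0 := if_neg hM
      simp [this]

lemma Q_meas (d : ℝ) : Measurable (Qf d) := by
  unfold Qf
  have : Measurable (fun p : (ℝ × ℝ) × ℝ => if p.1.2 < p.1.1 then Mf d p.1.2 p.2 else 0) :=
    Measurable.ite (measurableSet_lt (by fun_prop) (by fun_prop))
      ((Mf_meas d).comp (by fun_prop : Measurable fun p : (ℝ × ℝ) × ℝ => (p.1.2, p.2)))
      measurable_const
  exact this.lintegral_prod_right'.lintegral_prod_right'

lemma G_meas (d : ℝ) : Measurable (Gf d) := by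
  unfold Gf
  have : Measurable (fun p : (ℝ × ℝ) × ℝ => if p.2 < p.1.1 ∧ p.1.1 < p.1.2 then Mf d p.1.2 p.2 else 0) :=
    Measurable.ite ((measurableSet_lt measurable_snd (measurable_fst.comp measurable_fst)).inter
      (measurableSet_lt (measurable_fst.comp measurable_fst) (measurable_snd.comp measurable_fst)))
      ((Mf_meas d).comp (by fun_prop : Measurable fun p : (ℝ × ℝ) × ℝ => (p.1.2, p.2)))
      measurable_const
  exact this.lintegral_prod_right'.lintegral_prod_right'

lemma Wf_symm (d b : ℝ) : Wf d (1 - b) = Wf d b := by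
  unfold Wf
  refine if_congr ⟨?_, ?_⟩ ?_ rfl
  · rintro ⟨h1, h2⟩; exact ⟨by linarith, by linarith⟩
  · rintro ⟨h1, h2⟩; exact ⟨by linarith, by linarith⟩
  · rw [sub_sub_cancel, mul_comm]

lemma J_eq (d : ℝ) : (∫⁻ b, Wf d b * Gf d b) + ((∫⁻ b, Wf d b * Qf d b) + ∫⁻ b, Wf d b * Qf d b)
    = (∫⁻ b, Wf d b) * Qf d 1 := by
  have h : ∫⁻ b, Wf d b * Qf d b = ∫⁻ b, Wf d b * Qf d (1 - b) := by
    rw [← lintegral_sub_left_eq_self _ (1:ℝ)]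
    simp_rw [Wf_symm]
  nth_rewrite 2 [h]
  rw [← lintegral_add_left ((Wf_meas d).fun_mul (Q_meas d)),
    ← lintegral_add_left ((Wf_meas d).fun_mul (G_meas d)), ← lintegral_mul_const _ (Wf_meas d)]
  refine lintegral_congr fun b => ?_
  rw [← split_eq d b]; ring

lemma W_eq {d : ℝ} (h1 : d < 1) :
    ∫⁻ b, Wf d b = ENNReal.ofReal (ProbabilityTheory.beta (1 - d) (1 - d)) := by
  rw [← lint_beta (by linarith) (by linarith)]
  simp only [Wf, show 1 - d - 1 = -d by ring]

lemma WQ_eq {d : ℝ} (h0 : 0 ≤ d) (h1 : d < 1) :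
    ∫⁻ b, Wf d b * Qf d b =
      ∑' k : ℕ, ENNReal.ofReal (qk d k * ProbabilityTheory.beta (k + 3 - 3 * d) (1 - d)) := by
  have e : ∀ b, Wf d b * Qf d b = ∑' k : ℕ, ENNReal.ofReal (qk d k) *
      (if 0 < b ∧ b < 1 then ENNReal.ofReal (b ^ ((k + 3 - 3 * d) - 1) * (1 - b) ^ ((1 - d) - 1)) else 0) := by
    intro b
    by_cases h : 0 < b ∧ b < 1
    · rw [Q_eq h0 h1 h.1 h.2.le, Wf, if_pos h, ← ENNReal.tsum_mul_left]
      refine tsum_congr fun k => ?_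
      have := h.1
      have : 0 < 1 - b := by linarith [h.2]
      rw [if_pos h, ← ENNReal.ofReal_mul (by positivity), ← ENNReal.ofReal_mul (qk_nonneg h0 h1 k)]
      congr 1
      rw [show (k:ℝ) + 3 - 3 * d - 1 = -d + (k + 2 - 2 * d) by ring, Real.rpow_add h.1,
        show 1 - d - 1 = -d by ring]
      ring
    · simp [Wf, h]
  simp_rw [e]
  rw [lintegral_tsum]
  · refine tsum_congr fun k => ?_
    have : (0:ℝ) ≤ k := k.cast_nonneg
    rw [lintegral_const_mul' _ _ ENNReal.ofReal_ne_top, lint_beta (by linarith) (by linarith),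
      ← ENNReal.ofReal_mul (qk_nonneg h0 h1 k)]
  · intro k
    refine Measurable.aemeasurable (Measurable.const_mul (Measurable.ite ?_ (by fun_prop) (by fun_prop)) _)
    exact measurableSet_Ioo

lemma Q1_ne_top {d : ℝ} (h0 : 0 ≤ d) (h1 : d < 1) : Qf d 1 ≠ ⊤ := by
  rw [Q_eq h0 h1 one_pos le_rfl]
  simp only [Real.one_rpow, mul_one]
  exact (qk_summable h0 h1).tsum_ofReal_ne_top

lemma Q1_toReal {d : ℝ} (h0 : 0 ≤ d) (h1 : d < 1) : (Qf d 1).toReal = ∑' k, qk d k := by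
  rw [Q_eq h0 h1 one_pos le_rfl]
  simp only [Real.one_rpow, mul_one]
  rw [ENNReal.tsum_toReal_eq (fun _ => ENNReal.ofReal_ne_top)]
  exact tsum_congr fun k => ENNReal.toReal_ofReal (qk_nonneg h0 h1 k)

lemma J_ne_top {d : ℝ} (h0 : 0 ≤ d) (h1 : d < 1) : ∫⁻ b, Wf d b * Gf d b ≠ ⊤ := by
  refine ne_top_of_le_ne_top ?_ (le_self_add.trans_eq (J_eq d))
  rw [W_eq h1]
  exact ENNReal.mul_ne_top ENNReal.ofReal_ne_top (Q1_ne_top h0 h1)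

lemma J_toReal {d : ℝ} (h0 : 0 ≤ d) (h1 : d < 1) : (∫⁻ b, Wf d b * Gf d b).toReal =
    ProbabilityTheory.beta (1 - d) (1 - d) * ∑' k, qk d k
    - 2 * ∑' k : ℕ, qk d k * ProbabilityTheory.beta (k + 3 - 3 * d) (1 - d) := by
  have h := J_eq d
  have hT : (∫⁻ b, Wf d b) * Qf d 1 ≠ ⊤ := by
    rw [W_eq h1]
    exact ENNReal.mul_ne_top ENNReal.ofReal_ne_top (Q1_ne_top h0 h1)
  have hT2 := hT
  rw [← h] at hT2
  have hQ := (ENNReal.add_ne_top.1 (ENNReal.add_ne_top.1 hT2).2).1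
  have h2 := congrArg ENNReal.toReal h
  rw [ENNReal.toReal_add (J_ne_top h0 h1) (ENNReal.add_ne_top.1 hT2).2, ENNReal.toReal_add hQ hQ,
    ENNReal.toReal_mul, W_eq h1, Q1_toReal h0 h1,
    ENNReal.toReal_ofReal (ProbabilityTheory.beta_pos (by linarith) (by linarith)).le] at h2
  have h3 : (∫⁻ b, Wf d b * Qf d b).toReal =
      ∑' k : ℕ, qk d k * ProbabilityTheory.beta (k + 3 - 3 * d) (1 - d) := by
    rw [WQ_eq h0 h1, ENNReal.tsum_toReal_eq (fun _ => ENNReal.ofReal_ne_top)]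
    refine tsum_congr fun k => ENNReal.toReal_ofReal (mul_nonneg (qk_nonneg h0 h1 k) ?_)
    have : (0:ℝ) ≤ k := k.cast_nonneg
    exact (ProbabilityTheory.beta_pos (by linarith) (by linarith)).le
  rw [h3] at h2
  linarith

lemma qk_hyp {d : ℝ} (h1 : d < 1) (k : ℕ) : qk d k =
    1 / (2 * (1 - d) ^ 2) * (poch d k * poch (2 - 2 * d) k / (poch (2 - d) k * poch (3 - 2 * d) k)) := by
  have hd : 0 < 1 - d := by linarith
  have h2 := poch_ratio (show 0 < 2 - 2 * d by linarith) k
  rw [show 2 - 2 * d + 1 = 3 - 2 * d by ring] at h2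
  rw [mul_div_mul_comm, h2, qk, co, show (k:ℝ) + 2 - 2 * d = 2 - 2 * d + k by ring]
  have := (poch_pos (show 0 < 2 - d by linarith) k).ne'
  have : 2 - 2 * d + (k:ℝ) ≠ 0 := by
    have : (0:ℝ) ≤ k := k.cast_nonneg
    linarith
  field_simp

lemma J_final {d : ℝ} (h0 : 0 ≤ d) (h1 : d < 1) : (∫⁻ b, Wf d b * Gf d b).toReal =
    Real.Gamma (1 - d) * Real.Gamma (2 - d) / ((1 - d) ^ 2 * Real.Gamma (3 - 2 * d)) *
        hyp3F2 1 d (2 - 2 * d) (2 - d) (3 - 2 * d) 1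
      - Real.Gamma (1 - d) * Real.Gamma (3 - 3 * d) / ((1 - d) ^ 2 * Real.Gamma (4 - 4 * d)) *
          hyp4F3 1 d (2 - 2 * d) (3 - 3 * d) (2 - d) (3 - 2 * d) (4 - 4 * d) 1 := by
  have hd : 0 < 1 - d := by linarith
  rw [J_toReal h0 h1]
  have hG1 := Real.Gamma_pos_of_pos hd
  have hG2 := Real.Gamma_pos_of_pos (show 0 < 2 - 2 * d by linarith)
  have hG4 := Real.Gamma_pos_of_pos (show 0 < 4 - 4 * d by linarith)
  have e2 : Real.Gamma (2 - d) = (1 - d) * Real.Gamma (1 - d) := by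
    rw [← Real.Gamma_add_one hd.ne']; congr 1; ring
  have e3 : Real.Gamma (3 - 2 * d) = (2 - 2 * d) * Real.Gamma (2 - 2 * d) := by
    rw [← Real.Gamma_add_one (by linarith)]; congr 1; ring
  congr 1
  · rw [hyp3F2, ← tsum_mul_left, ← tsum_mul_left]
    refine tsum_congr fun k => ?_
    rw [qk_hyp h1, poch_one, e2, e3, ProbabilityTheory.beta, show 1 - d + (1 - d) = 2 - 2 * d by ring]
    have := (poch_pos (show 0 < 2 - d by linarith) k).ne'
    have := (poch_pos (show 0 < 3 - 2 * d by linarith) k).ne'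
    have := Nat.factorial_ne_zero k
    have : 2 - 2 * d ≠ 0 := by linarith
    field_simp
    ring
  · rw [hyp4F3, ← tsum_mul_left, ← tsum_mul_left]
    refine tsum_congr fun k => ?_
    rw [qk_hyp h1, poch_one, ProbabilityTheory.beta,
      show (k:ℝ) + 3 - 3 * d + (1 - d) = (4 - 4 * d) + k by ring,
      show (k:ℝ) + 3 - 3 * d = (3 - 3 * d) + k by ring, Gamma_poch (by linarith),
      Gamma_poch (by linarith), one_pow]
    have := (poch_pos (show 0 < 2 - d by linarith) k).ne'
    have := (poch_pos (show 0 < 3 - 2 * d by linarith) k).ne'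
    have := (poch_pos (show 0 < 4 - 4 * d by linarith) k).ne'
    have := Nat.factorial_ne_zero k
    field_simp

noncomputable def Tf (d y₂ y₃ y₄ y₅ : ℝ) : ENNReal :=
  if 0 < y₅ ∧ y₅ < y₄ ∧ y₄ < y₃ ∧ y₃ < y₂ ∧ y₂ < 1 then
    ENNReal.ofReal ((1 - y₃) ^ (-d) * ((y₂ - y₄) ^ (-d) * (1 - y₄) ^ (-d) *
      ((y₂ - y₅) ^ (-d) * (y₃ - y₅) ^ (-d)))) else 0

lemma Tf_meas (d : ℝ) :
    Measurable (fun p : ℝ × ℝ × ℝ × ℝ => Tf d p.1 p.2.1 p.2.2.1 p.2.2.2) := by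
  unfold Tf
  refine Measurable.ite ?_ (by fun_prop) (by fun_prop)
  simp only [Set.ofPred_and]
  refine .inter ?_ (.inter ?_ (.inter ?_ (.inter ?_ ?_))) <;>
    refine measurableSet_lt ?_ ?_ <;> fun_prop

lemma int_line {y : ℝ} (hy : 0 ≤ y) (f : ℝ → ℝ) :
    ∫ x in (0:ℝ)..y, f x = ∫ x, if 0 < x ∧ x < y then f x else 0 := by
  rw [intervalIntegral.integral_of_le hy, integral_Ioc_eq_integral_Ioo,
    ← integral_indicator measurableSet_Ioo]
  refine integral_congr_ae (Filter.Eventually.of_forall fun x => ?_)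
  simp [Set.indicator_apply, Set.mem_Ioo]

lemma lhs_eq (d : ℝ) : (∫ y₂ in (0:ℝ)..1, ∫ y₃ in (0:ℝ)..y₂, (1 - y₃) ^ (-d) *
      ∫ y₄ in (0:ℝ)..y₃, (y₂ - y₄) ^ (-d) * (1 - y₄) ^ (-d) *
        ∫ y₅ in (0:ℝ)..y₄, (y₂ - y₅) ^ (-d) * (y₃ - y₅) ^ (-d))
    = ∫ y₂, ∫ y₃, ∫ y₄, ∫ y₅, (Tf d y₂ y₃ y₄ y₅).toReal := by
  have z : ∀ y₂ y₃ y₄ y₅, ¬ (0 < y₅ ∧ y₅ < y₄ ∧ y₄ < y₃ ∧ y₃ < y₂ ∧ y₂ < 1) →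
      Tf d y₂ y₃ y₄ y₅ = 0 := fun _ _ _ _ h => if_neg h
  rw [int_line zero_le_one]
  congr 1; funext y₂
  by_cases h2 : 0 < y₂ ∧ y₂ < 1
  swap
  · rw [if_neg h2]
    have : ∀ y₃ y₄ y₅, Tf d y₂ y₃ y₄ y₅ = 0 := fun _ _ _ =>
      z _ _ _ _ (fun h => h2 ⟨by linarith, by linarith⟩)
    simp [this]
  rw [if_pos h2, int_line h2.1.le]
  congr 1; funext y₃
  by_cases h3 : 0 < y₃ ∧ y₃ < y₂
  swap
  · rw [if_neg h3]
    have : ∀ y₄ y₅, Tf d y₂ y₃ y₄ y₅ = 0 := fun _ _ =>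
      z _ _ _ _ (fun h => h3 ⟨by linarith, by linarith⟩)
    simp [this]
  rw [if_pos h3, ← intervalIntegral.integral_const_mul, int_line h3.1.le]
  congr 1; funext y₄
  by_cases h4 : 0 < y₄ ∧ y₄ < y₃
  swap
  · rw [if_neg h4]
    have : ∀ y₅, Tf d y₂ y₃ y₄ y₅ = 0 := fun _ =>
      z _ _ _ _ (fun h => h4 ⟨by linarith, by linarith⟩)
    simp [this]
  rw [if_pos h4, ← intervalIntegral.integral_const_mul, ← intervalIntegral.integral_const_mul,
    int_line h4.1.le]
  congr 1; funext y₅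
  by_cases h5 : 0 < y₅ ∧ y₅ < y₄
  swap
  · rw [if_neg h5, z _ _ _ _ (fun h => h5 ⟨by linarith, by linarith⟩)]
    simp
  rw [if_pos h5, Tf, if_pos ⟨h5.1, h5.2, h4.2, h3.2, h2.2⟩, ENNReal.toReal_ofReal]
  have a1 : 0 ≤ 1 - y₃ := by linarith
  have a2 : 0 ≤ 1 - y₄ := by linarith
  have a3 : 0 ≤ y₂ - y₄ := by linarith
  have a4 : 0 ≤ y₂ - y₅ := by linarith
  have a5 : 0 ≤ y₃ - y₅ := by linarith
  positivity

lemma Tf_swap (d : ℝ) : ∫⁻ y₂, ∫⁻ y₃, ∫⁻ y₄, ∫⁻ y₅, Tf d y₂ y₃ y₄ y₅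
    = ∫⁻ y₅, ∫⁻ y₃, ∫⁻ y₂, ∫⁻ y₄, Tf d y₂ y₃ y₄ y₅ := by
  have hT := Tf_meas d
  have hq : Measurable (fun p : ((ℝ × ℝ) × ℝ) × ℝ => Tf d p.1.1.1 p.1.1.2 p.2 p.1.2) :=
    hT.comp (by fun_prop : Measurable fun p : ((ℝ × ℝ) × ℝ) × ℝ => (p.1.1.1, p.1.1.2, p.2, p.1.2))
  have h3 : Measurable (fun p : (ℝ × ℝ) × ℝ => ∫⁻ y₄, Tf d p.1.1 p.1.2 y₄ p.2) :=
    hq.lintegral_prod_right'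
  have h3' : Measurable (fun p : (ℝ × ℝ) × ℝ => ∫⁻ y₄, Tf d p.1.1 p.2 y₄ p.1.2) :=
    h3.comp (by fun_prop : Measurable fun p : (ℝ × ℝ) × ℝ => ((p.1.1, p.2), p.1.2))
  have h2 : Measurable (fun p : ℝ × ℝ => ∫⁻ y₃, ∫⁻ y₄, Tf d p.1 y₃ y₄ p.2) :=
    h3'.lintegral_prod_right'
  have s1 : ∀ y₂ y₃, ∫⁻ y₄, ∫⁻ y₅, Tf d y₂ y₃ y₄ y₅ = ∫⁻ y₅, ∫⁻ y₄, Tf d y₂ y₃ y₄ y₅ := by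
    intro y₂ y₃
    exact lint_swap (hT.comp (by fun_prop : Measurable fun p : ℝ × ℝ => (y₂, y₃, p.1, p.2)))
  have s2 : ∀ y₂, ∫⁻ y₃, ∫⁻ y₅, ∫⁻ y₄, Tf d y₂ y₃ y₄ y₅ = ∫⁻ y₅, ∫⁻ y₃, ∫⁻ y₄, Tf d y₂ y₃ y₄ y₅ := by
    intro y₂
    exact lint_swap (h3.comp (by fun_prop : Measurable fun p : ℝ × ℝ => ((y₂, p.1), p.2)))
  simp_rw [s1, s2]
  rw [lint_swap h2]
  refine lintegral_congr fun y₅ => ?_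
  exact lint_swap (h3.comp (by fun_prop : Measurable fun p : ℝ × ℝ => ((p.1, p.2), y₅)))

lemma Tf_scale (d a b c : ℝ) {y : ℝ} (h0 : 0 < y) (h1 : y < 1) :
    Tf d (y + (1 - y) * a) (y + (1 - y) * b) (y + (1 - y) * c) y =
      ENNReal.ofReal ((1 - y) ^ (-5 * d)) * (Wf d b * if c < b ∧ b < a then Mf d a c else 0) := by
  have hk : 0 < 1 - y := by linarith
  by_cases h : 0 < c ∧ c < b ∧ b < a ∧ a < 1
  · obtain ⟨c0, cb, ba, a1⟩ := h
    have hcond : 0 < y ∧ y < y + (1 - y) * c ∧ y + (1 - y) * c < y + (1 - y) * b ∧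
        y + (1 - y) * b < y + (1 - y) * a ∧ y + (1 - y) * a < 1 := by
      refine ⟨h0, ?_, ?_, ?_, ?_⟩ <;> nlinarith
    have p1 : 0 < 1 - b := by linarith
    have p2 : 0 < a - c := by linarith
    have p3 : 0 < 1 - c := by linarith
    have p4 : 0 < b := by linarith
    have p5 : 0 < a := by linarith
    rw [Tf, if_pos hcond, Wf, if_pos ⟨p4, by linarith⟩, if_pos ⟨cb, ba⟩, Mf,
      if_pos ⟨c0, by linarith, a1⟩, ← ENNReal.ofReal_mul (by positivity),
      ← ENNReal.ofReal_mul (by positivity)]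
    congr 1
    rw [show 1 - (y + (1 - y) * b) = (1 - y) * (1 - b) by ring,
      show y + (1 - y) * a - (y + (1 - y) * c) = (1 - y) * (a - c) by ring,
      show 1 - (y + (1 - y) * c) = (1 - y) * (1 - c) by ring,
      show y + (1 - y) * a - y = (1 - y) * a by ring,
      show y + (1 - y) * b - y = (1 - y) * b by ring,
      Real.mul_rpow hk.le p1.le, Real.mul_rpow hk.le p2.le, Real.mul_rpow hk.le p3.le,
      Real.mul_rpow hk.le p4.le, Real.mul_rpow hk.le p5.le,
      show -5 * d = -d + -d + -d + -d + -d by ring, Real.rpow_add hk, Real.rpow_add hk,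
      Real.rpow_add hk, Real.rpow_add hk]
    ring
  · have hz : (Wf d b * if c < b ∧ b < a then Mf d a c else 0) = 0 := by
      by_cases h' : c < b ∧ b < a
      · have : Mf d a c = 0 := if_neg (fun h'' => h ⟨h''.1, h'.1, h'.2, h''.2.2⟩)
        simp [this]
      · simp [h']
    rw [hz, mul_zero, Tf, if_neg]
    rintro ⟨-, e1, e2, e3, e4⟩
    refine h ⟨?_, ?_, ?_, ?_⟩
    · exact pos_of_mul_pos_right (by linarith : 0 < (1 - y) * c) hk.le
    · exact lt_of_mul_lt_mul_left (by linarith : (1 - y) * c < (1 - y) * b) hk.le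
    · exact lt_of_mul_lt_mul_left (by linarith : (1 - y) * b < (1 - y) * a) hk.le
    · exact lt_of_mul_lt_mul_left (by linarith : (1 - y) * a < (1 - y) * 1) hk.le

lemma Wf_ne_top (d b : ℝ) : Wf d b ≠ ⊤ := by
  unfold Wf; split_ifs <;> simp

lemma inner_eq (d : ℝ) (y : ℝ) : ∫⁻ y₃, ∫⁻ y₂, ∫⁻ y₄, Tf d y₂ y₃ y₄ y =
    (if 0 < y ∧ y < 1 then
      ENNReal.ofReal (y ^ ((1:ℝ) - 1) * (1 - y) ^ ((4 - 5 * d) - 1)) else 0)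
      * ∫⁻ b, Wf d b * Gf d b := by
  by_cases h : 0 < y ∧ y < 1
  swap
  · have : ∀ y₂ y₃ y₄, Tf d y₂ y₃ y₄ y = 0 := fun _ _ _ =>
      if_neg (fun h' => h ⟨by linarith, by linarith⟩)
    simp [this, h]
  obtain ⟨h0, h1⟩ := h
  have hk : 0 < 1 - y := by linarith
  rw [lint_affine _ y hk]
  have e : ∀ b, ∫⁻ y₂, ∫⁻ y₄, Tf d y₂ (y + (1 - y) * b) y₄ y =
      (ENNReal.ofReal (1 - y) * ENNReal.ofReal (1 - y) * ENNReal.ofReal ((1 - y) ^ (-5 * d))) *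
        (Wf d b * Gf d b) := by
    intro b
    rw [lint_affine _ y hk]
    have e' : ∀ a, ∫⁻ y₄, Tf d (y + (1 - y) * a) (y + (1 - y) * b) y₄ y =
        (ENNReal.ofReal (1 - y) * ENNReal.ofReal ((1 - y) ^ (-5 * d)) * Wf d b) *
        (∫⁻ c, if c < b ∧ b < a then Mf d a c else 0) := by
      intro a
      rw [lint_affine _ y hk]
      simp_rw [Tf_scale d a b _ h0 h1]
      rw [lintegral_const_mul' _ _ ENNReal.ofReal_ne_top, lintegral_const_mul' _ _ (Wf_ne_top d b)]
      ring
    simp_rw [e']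
    rw [lintegral_const_mul' _ _ (by
      exact ENNReal.mul_ne_top (ENNReal.mul_ne_top ENNReal.ofReal_ne_top ENNReal.ofReal_ne_top)
        (Wf_ne_top d b)), Gf]
    ring
  simp_rw [e]
  rw [lintegral_const_mul' _ _ (by
      exact ENNReal.mul_ne_top (ENNReal.mul_ne_top ENNReal.ofReal_ne_top ENNReal.ofReal_ne_top)
        ENNReal.ofReal_ne_top), ← mul_assoc, if_pos ⟨h0, h1⟩, ← ENNReal.ofReal_mul hk.le,
    ← ENNReal.ofReal_mul (by positivity), ← ENNReal.ofReal_mul (by positivity)]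
  congr 2
  rw [sub_self, Real.rpow_zero, show 4 - 5 * d - 1 = -5 * d + (3:ℕ) by push_cast; ring,
    Real.rpow_add_natCast hk.ne']
  ring

lemma total_eq {d : ℝ} (hd1 : d < 4 / 5) : ∫⁻ y₂, ∫⁻ y₃, ∫⁻ y₄, ∫⁻ y₅, Tf d y₂ y₃ y₄ y₅ =
    ENNReal.ofReal (ProbabilityTheory.beta 1 (4 - 5 * d)) * ∫⁻ b, Wf d b * Gf d b := by
  rw [Tf_swap]
  simp_rw [inner_eq]
  rw [lintegral_mul_const, lint_beta one_pos (by linarith)]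
  exact Measurable.ite measurableSet_Ioo (by fun_prop) (by fun_prop)

theorem quadruple_integral (d : ℝ) (hd0 : 0 ≤ d) (hd1 : d < 4 / 5) :
    (∫ y₂ in (0:ℝ)..1, ∫ y₃ in (0:ℝ)..y₂, (1 - y₃) ^ (-d) *
      ∫ y₄ in (0:ℝ)..y₃, (y₂ - y₄) ^ (-d) * (1 - y₄) ^ (-d) *
        ∫ y₅ in (0:ℝ)..y₄, (y₂ - y₅) ^ (-d) * (y₃ - y₅) ^ (-d))
    = Real.Gamma (1 - d) * Real.Gamma (2 - d) * Real.Gamma (4 - 5 * d) /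
        ((1 - d) ^ 2 * Real.Gamma (3 - 2 * d) * Real.Gamma (5 - 5 * d)) *
        hyp3F2 1 d (2 - 2 * d) (2 - d) (3 - 2 * d) 1
      - Real.Gamma (1 - d) * Real.Gamma (3 - 3 * d) * Real.Gamma (4 - 5 * d) /
          ((1 - d) ^ 2 * Real.Gamma (4 - 4 * d) * Real.Gamma (5 - 5 * d)) *
          hyp4F3 1 d (2 - 2 * d) (3 - 3 * d) (2 - d) (3 - 2 * d) (4 - 4 * d) 1 := by
  have h1 : d < 1 := by linarith
  have hb : 0 < ProbabilityTheory.beta 1 (4 - 5 * d) :=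
    ProbabilityTheory.beta_pos one_pos (by linarith)
  have hfin : ∫⁻ y₂, ∫⁻ y₃, ∫⁻ y₄, ∫⁻ y₅, Tf d y₂ y₃ y₄ y₅ ≠ ⊤ := by
    rw [total_eq hd1]
    exact ENNReal.mul_ne_top ENNReal.ofReal_ne_top (J_ne_top hd0 h1)
  rw [lhs_eq, lint_toReal4 (Tf_meas d) hfin, total_eq hd1, ENNReal.toReal_mul,
    ENNReal.toReal_ofReal hb.le, J_final hd0 h1, ProbabilityTheory.beta, Real.Gamma_one,
    show 1 + (4 - 5 * d) = 5 - 5 * d by ring]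
  have g1 := (Real.Gamma_pos_of_pos (show 0 < 5 - 5 * d by linarith)).ne'
  have g2 := (Real.Gamma_pos_of_pos (show 0 < 3 - 2 * d by linarith)).ne'
  have g3 := (Real.Gamma_pos_of_pos (show 0 < 4 - 4 * d by linarith)).ne'
  have g4 : (1 - d) ≠ 0 := by linarith
  rw [mul_sub]
  congr 1 <;> field_simp
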